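/- If a group G has a pregroup structure with respect to a finite subset P ⊆ G, then G is virtually free: G contains a free subgroup of finite index. In particular, G is word-hyperbolic. -/

import Mathlib

open Metric Set

section Pregroup

variable {G : Type*} [Group G]

/-- A reduced `P`-product: a nonempty tuple of elements of `P` such that no two
consecutive entries multiply into `P`. -/
def IsReducedProd (P : Set G) (u : List G) : Prop :=
  u ≠ [] ∧ (∀ x ∈ u, x ∈ P) ∧
    ∀ i : ℕ, ∀ h : i + 1 < u.length, u[i]'(Nat.lt_of_succ_lt h) * u[i + 1]'h ∉ P

/-- `G` has a pregroup structure with respect to the subset `P ⊆ G`. -/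
structure IsPregroupStructure (P : Set G) : Prop where
  one_mem : (1 : G) ∈ P
  inv_mem : ∀ x ∈ P, x⁻¹ ∈ P
  p5 : ∀ u ∈ P, ∀ v ∈ P, ∀ w ∈ P, ∀ z ∈ P,
    u * v ∈ P → v * w ∈ P → w * z ∈ P → u * v * w ∈ P ∨ v * w * z ∈ P
  exists_rep : ∀ g : G, ∃ u : List G, IsReducedProd P u ∧ u.prod = g
  uniq : ∀ u v : List G, IsReducedProd P u → IsReducedProd P v → u.prod = v.prod →
    u.length = v.length ∧
      ∃ a : ℕ → G, a 0 = 1 ∧ a u.length = 1 ∧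
        (∀ i : ℕ, 0 < i → i < u.length → a i ∈ P) ∧
        ∀ i : ℕ, ∀ hu : i < u.length, ∀ hv : i < v.length,
          (a i)⁻¹ * u[i] * a (i + 1) ∈ P ∧ v[i] = (a i)⁻¹ * u[i] * a (i + 1)

/-- `B_P = {b ∈ P : zb ∈ P and bz ∈ P for all z ∈ P}`. -/
def BP (P : Set G) : Set G :=
  {b | b ∈ P ∧ ∀ z ∈ P, z * b ∈ P ∧ b * z ∈ P}

/-- Axiom (P6). -/
def AxiomP6 (P : Set G) : Prop :=
  ∀ x ∈ P, ∀ y ∈ P, x * y ∉ P → ∀ a ∈ P, x * a ∈ P → a⁻¹ * y ∈ P → a ∈ BP P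

/-- Axiom (H0): `B_P` is finite. -/
def AxiomH0 (P : Set G) : Prop := (BP P).Finite

end Pregroup

section Geometry

variable {X : Type*} [MetricSpace X]

/-- A geodesic parametrization (by arclength on `[0, dist x y]`) from `x` to `y`. -/
def IsGeodesicParam (f : ℝ → X) (x y : X) : Prop :=
  f 0 = x ∧ f (dist x y) = y ∧
    ∀ a ∈ Icc (0 : ℝ) (dist x y), ∀ b ∈ Icc (0 : ℝ) (dist x y),
      dist (f a) (f b) = |a - b|

/-- `s` is a geodesic segment from `x` to `y`. -/
def IsGeodesicSegment (s : Set X) (x y : X) : Prop :=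
  ∃ f : ℝ → X, IsGeodesicParam f x y ∧ s = f '' Icc (0 : ℝ) (dist x y)

/-- A geodesic metric space: any two points are joined by a geodesic segment. -/
def IsGeodesicSpace (X : Type*) [MetricSpace X] : Prop :=
  ∀ x y : X, ∃ s : Set X, IsGeodesicSegment s x y

/-- A triangle with sides `s, t, r` is `C`-thin: each side lies in the closed
`C`-neighborhood of the union of the other two sides. -/
def ThinTriangle (C : ℝ) (s t r : Set X) : Prop :=
  s ⊆ cthickening C (t ∪ r) ∧ t ⊆ cthickening C (s ∪ r) ∧ r ⊆ cthickening C (s ∪ t)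

end Geometry

section Cayley

variable {G : Type*} [Group G] {X : Type*} [MetricSpace X]

/-- The word length of `g` with respect to the generating set `S`. -/
noncomputable def wordLength (S : Set G) (g : G) : ℕ :=
  sInf {n | ∃ l : List G, l.length = n ∧ (∀ x ∈ l, x ∈ S ∨ x⁻¹ ∈ S) ∧ l.prod = g}

/-- `ι : G → X` realizes the geodesic metric space `X` as the Cayley graph
`Γ(G,S)`: `S` generates `G`, the metric on vertices is the word metric, `X` is a
geodesic space, and every point of `X` is within `1/2` of a vertex. -/
structure IsCayleyGraph (S : Set G) (ι : G → X) : Prop where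
  generates : Subgroup.closure S = ⊤
  dist_eq : ∀ g h : G, dist (ι g) (ι h) = wordLength S (g⁻¹ * h)
  geodesic : IsGeodesicSpace X
  dense : ∀ x : X, ∃ g : G, dist x (ι g) ≤ 1 / 2

/-- Axiom (H1), with constant `C₁`: geodesic triangles on vertices `1, p, pq`
(`p, q ∈ P`) are `C₁`-thin. -/
def AxiomH1 (P : Set G) (ι : G → X) (C₁ : ℝ) : Prop :=
  ∀ p ∈ P, ∀ q ∈ P, ∀ s t r : Set X,
    IsGeodesicSegment s (ι 1) (ι p) → IsGeodesicSegment t (ι p) (ι (p * q)) →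
      IsGeodesicSegment r (ι 1) (ι (p * q)) → ThinTriangle C₁ s t r

/-- Axiom (H2), with constant `C₂`: if the Gromov product `(p⁻¹ · q)_1` exceeds
`C₂` then `pq ∈ P`. -/
def AxiomH2 (P : Set G) (ι : G → X) (C₂ : ℝ) : Prop :=
  ∀ p ∈ P, ∀ q ∈ P,
    (dist (ι 1) (ι p) + dist (ι 1) (ι q) - dist (ι p⁻¹) (ι q)) / 2 > C₂ → p * q ∈ P

/-- Axiom (H3), with constant `C₃`: every vertex on a geodesic from `1` to `p ∈ P`
is a reduced product `p₁ p₂` with `|p₂| ≤ C₃`. -/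
def AxiomH3 (P : Set G) (ι : G → X) (C₃ : ℝ) : Prop :=
  ∀ p ∈ P, ∀ s : Set X, IsGeodesicSegment s (ι 1) (ι p) →
    ∀ x : G, ι x ∈ s →
      ∃ p₁ p₂ : G, IsReducedProd P [p₁, p₂] ∧ p₁ * p₂ = x ∧ dist (ι 1) (ι p₂) ≤ C₃

/-- The path in `Γ(G,S)` defined by the `P`-product `u` based at `x`: a
concatenation of geodesic segments `[x u(i), x u(i+1)]`. -/
def IsPathOf (ι : G → X) (x : G) (u : List G) (pa : Set X) : Prop :=
  ∃ segs : Fin u.length → Set X,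
    (∀ i : Fin u.length,
      IsGeodesicSegment (segs i)
        (ι (x * (u.take i.1).prod)) (ι (x * (u.take (i.1 + 1)).prod))) ∧
    pa = ⋃ i, segs i

end Cayley

/-!
Let `P` span a Cayley graph of `G`, and let the closure of an edge consist of the vertices adjacent
to all common neighbours of its endpoints. By axiom (P5), for every triangle `g, b, c` of this graph
either `c` lies in the closure of the edge `gb` or `b` lies in that of `gc`. Hence every triangle is
contained in an edge closure, and the edge closures that contain a given point and are contained in
a given closure form a chain. The Hasse diagram of the closures, ordered by inclusion, is a tree. It
is connected because `P` is finite and generates `G`. To see that a covering pair `A ⋖ C` is a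
bridge, count modulo two how often a path in the Cayley graph crosses it: this weight is
multiplicative on triangles, and since the only reduced product for `1` is `1` itself, loops are
filled by triangles, so the weight integrates to a sign that changes across `A ⋖ C` and nowhere
else.

The stabilizers of the action of `G` on this tree have order at most `|P|`. Giving all fibres the
same cardinality, a common multiple of these orders, one obtains a free `G`-set over the vertices
that carries an equivariant covering graph of the tree. The subgroup fixing each of its finitely
many components acts freely on the tree, and is therefore free: the edge orbits met along the
geodesic from `v` to `g • v` spell a reduced word.

For hyperbolicity, consider reduced products for the elements `g⁻¹ * h`. Contracting a word in `P`
to a reduced product only discards initial segments, and two reduced products for the same element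
have initial segments that differ by elements of `P`. So every coarse path from `g` to `h` passes
near each initial segment of the reduced product; this applies to one side of a geodesic triangle
and to the path formed by the other two.
-/

section Trees

variable {V : Type*} {T : SimpleGraph V}

theorem isChain_ne_edges_map {W : Type*} {E : SimpleGraph W} (π : E →g T)
    (hπ : ∀ a b c, E.Adj a b → E.Adj a c → π b = π c → b = c) {v w : W} (p : E.Walk v w)
    (hp : p.edges.IsChain (· ≠ ·)) : (p.map π).edges.IsChain (· ≠ ·) := by
  induction p with
  | nil => simp
  | cons hadj p ih =>
    cases p with
    | nil => simp
    | cons hadj' p =>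
      simp only [SimpleGraph.Walk.map_cons, SimpleGraph.Walk.edges_cons, List.isChain_cons_cons]
        at hp ih ⊢
      refine ⟨fun heq => hp.1 ?_, ih hp.2⟩
      rw [Sym2.eq_swap] at heq
      have hends := Sym2.congr_right.1 heq
      rw [hπ _ _ _ hadj.symm hadj' hends, Sym2.eq_swap]

theorem eq_of_reachable_of_map_eq {W : Type*} {E : SimpleGraph W} (hT : T.IsAcyclic)
    (π : E →g T) (hπ : ∀ a b c, E.Adj a b → E.Adj a c → π b = π c → b = c) {v w : W}
    (hvw : E.Reachable v w) (heq : π v = π w) : v = w := by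
  obtain ⟨p, hp⟩ := hvw.exists_isPath
  have hchain : p.edges.IsChain (· ≠ ·) :=
    (SimpleGraph.Walk.edges_nodup_of_support_nodup hp.support_nodup).isChain
  have hmap : (p.map π).IsPath :=
    (hT.isPath_iff_isChain _).2 (isChain_ne_edges_map π hπ p hchain)
  exact ((SimpleGraph.Walk.nil_map_iff π).1 (hmap.nil_iff_eq.2 heq)).eq

theorem exists_potential_of_isTree {M : Type*} [Group M] (hT : T.IsTree) (τ : T.Dart → M)
    (hτ : ∀ d, τ d.symm = (τ d)⁻¹) : ∃ U : V → M, ∀ d : T.Dart, U d.snd = U d.fst * τ d := by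
  classical
  have := hT.connected.nonempty
  let root : V := Classical.arbitrary V
  choose path hpath _ using hT.existsUnique_path root
  have hconcat : ∀ d : T.Dart, d.fst ∈ (path d.snd).support →
      ((path d.snd).darts.map τ).prod = ((path d.fst).darts.map τ).prod * τ d := fun d hd => by
    rw [hT.isAcyclic.path_concat (hpath d.fst) (hpath d.snd) d.adj hd,
      SimpleGraph.Walk.darts_concat]
    simp
  refine ⟨fun v => ((path v).darts.map τ).prod, fun d => ?_⟩
  by_cases hd : d.fst ∈ (path d.snd).support
  · exact hconcat d hd
  · have hback : ((path d.fst).darts.map τ).prod = ((path d.snd).darts.map τ).prod * (τ d)⁻¹ :=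
      hτ d ▸ hconcat d.symm (hT.isAcyclic.mem_support_of_ne_mem_support_of_adj_of_isPath
        (hpath d.fst) (hpath d.snd) d.adj hd)
    exact eq_mul_of_mul_inv_eq hback.symm

theorem potential_walk {M : Type*} [Group M] {τ : T.Dart → M} {U : V → M}
    (hU : ∀ d : T.Dart, U d.snd = U d.fst * τ d) {v w : V} (p : T.Walk v w) :
    U w = U v * (p.darts.map τ).prod := by
  induction p with
  | nil => simp
  | cons hadj p ih =>
    rw [ih, hU ⟨(_, _), hadj⟩, SimpleGraph.Walk.darts_cons, List.map_cons, List.prod_cons,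
      mul_assoc]

end Trees

section FreeActions

universe w

variable {G E E' B : Type*} [Group G] [MulAction G E] [MulAction G E'] [MulAction G B]

/-- `s` is a basis of the free `G`-set `E` over the base `B`: it picks one point in each orbit,
lying over the chosen representative `(q ω).out` of an orbit of the base. -/
def IsFreeBasis {Ω : Type*} (π : E →[G] B) (s : Ω → E) (q : Ω → MulAction.orbitRel.Quotient G B) :
    Prop :=
  (∀ ω, π (s ω) = (q ω).out) ∧ Function.Bijective fun x : Ω × G => x.2 • s x.1

theorem exists_isFreeBasis [IsCancelSMul G E] (π : E →[G] B) :
    ∃ (s : MulAction.orbitRel.Quotient G E → E)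
      (q : MulAction.orbitRel.Quotient G E → MulAction.orbitRel.Quotient G B),
      IsFreeBasis π s q := by
  have hpoint : ∀ ω : MulAction.orbitRel.Quotient G E,
      ∃ e : E, (⟦e⟧ : MulAction.orbitRel.Quotient G E) = ω ∧
        π e = (⟦π ω.out⟧ : MulAction.orbitRel.Quotient G B).out := fun ω => by
    obtain ⟨g, hg⟩ := MulAction.orbitRel_apply.1
      (Quotient.mk_out (s := MulAction.orbitRel G B) (π ω.out))
    refine ⟨g • ω.out, ?_, (map_smul π g _).trans hg⟩
    exact (Quotient.sound (MulAction.orbitRel_apply.2 ⟨g, rfl⟩)).trans ω.out_eq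
  choose s hs hπ using hpoint
  refine ⟨s, _, hπ, ?_, fun e => ?_⟩
  · rintro ⟨ω, g⟩ ⟨ω', g'⟩ heq
    have hω : ω = ω' := by
      rw [← hs ω, ← hs ω']
      refine Quotient.sound (MulAction.orbitRel_apply.2 ⟨g⁻¹ * g', ?_⟩)
      simp only [mul_smul]
      exact inv_smul_eq_iff.2 heq.symm
    subst hω
    exact Prod.ext rfl (IsCancelSMul.right_cancel _ _ _ heq)
  · obtain ⟨g, hg⟩ := MulAction.orbitRel_apply.1 (Quotient.exact (hs ⟦e⟧).symm)
    exact ⟨(⟦e⟧, g), hg⟩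

namespace IsFreeBasis

variable {Ω Ω' : Type*} {π : E →[G] B} {π' : E' →[G] B} {s : Ω → E} {s' : Ω' → E'}
  {q : Ω → MulAction.orbitRel.Quotient G B} {q' : Ω' → MulAction.orbitRel.Quotient G B}

theorem smul_mem_fiber_iff (hs : IsFreeBasis π s q) (c : MulAction.orbitRel.Quotient G B)
    (ω : Ω) (g : G) : π (g • s ω) = c.out ↔ q ω = c ∧ g ∈ MulAction.stabilizer G c.out := by
  rw [map_smul, hs.1, MulAction.mem_stabilizer_iff]
  constructor
  · intro h
    have hq : q ω = c := by
      rw [← (q ω).out_eq, ← c.out_eq]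
      exact (Quotient.sound (MulAction.orbitRel_apply.2 ⟨g, h⟩)).symm
    exact ⟨hq, hq ▸ h⟩
  · rintro ⟨rfl, h⟩
    exact h

theorem card_fiber (hs : IsFreeBasis π s q) (c : MulAction.orbitRel.Quotient G B) :
    Nat.card {e // π e = c.out} =
      Nat.card {ω // q ω = c} * Nat.card (MulAction.stabilizer G c.out) := by
  rw [← Nat.card_prod]
  refine Nat.card_congr (Equiv.symm ?_)
  calc {ω // q ω = c} × MulAction.stabilizer G c.out
      ≃ {x : Ω × G // q x.1 = c ∧ x.2 ∈ MulAction.stabilizer G c.out} :=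
        Equiv.subtypeProdEquivProd.symm
    _ ≃ {e // π e = c.out} := (Equiv.ofBijective _ hs.2).subtypeEquiv fun x =>
        (hs.smul_mem_fiber_iff c x.1 x.2).symm

theorem exists_equiv (hs : IsFreeBasis π s q) (hs' : IsFreeBasis π' s' q') (ε : Ω ≃ Ω')
    (hε : ∀ ω, q' (ε ω) = q ω) :
    ∃ φ : E ≃ E', (∀ (g : G) e, φ (g • e) = g • φ e) ∧ ∀ e, π' (φ e) = π e := by
  let φ : E ≃ E' := (Equiv.ofBijective _ hs.2).symm.trans
    ((ε.prodCongr (Equiv.refl G)).trans (Equiv.ofBijective _ hs'.2))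
  have hφ : ∀ ω (g : G), φ (g • s ω) = g • s' (ε ω) := fun ω g => by
    have : (Equiv.ofBijective _ hs.2).symm (g • s ω) = (ω, g) :=
      (Equiv.symm_apply_eq _).2 rfl
    simp only [φ, Equiv.trans_apply, this]
    rfl
  refine ⟨φ, fun g e => ?_, fun e => ?_⟩ <;> obtain ⟨⟨ω, h⟩, rfl⟩ := hs.2.2 e
  · simp only [smul_smul, hφ]
  · simp only [hφ, map_smul, hs.1, hs'.1, hε]

end IsFreeBasis

theorem exists_equiv_of_card_fiber_eq [IsCancelSMul G E] [IsCancelSMul G E'] (π : E →[G] B)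
    (π' : E' →[G] B) {n : ℕ} (hn : n ≠ 0) (hE : ∀ b, Nat.card {e // π e = b} = n)
    (hE' : ∀ b, Nat.card {e // π' e = b} = n) :
    ∃ φ : E ≃ E', (∀ (g : G) e, φ (g • e) = g • φ e) ∧ ∀ e, π' (φ e) = π e := by
  obtain ⟨s, q, hs⟩ := exists_isFreeBasis π
  obtain ⟨s', q', hs'⟩ := exists_isFreeBasis π'
  have hfiber : ∀ c, Nonempty ({ω // q ω = c} ≃ {ω // q' ω = c}) := fun c => by
    have hcard := (hs.card_fiber c).symm.trans (hE _)
    have hcard' := (hs'.card_fiber c).symm.trans (hE' _)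
    have hpos := mul_ne_zero_iff.1 (hcard.trans_ne hn)
    have hpos' := mul_ne_zero_iff.1 (hcard'.trans_ne hn)
    have := Nat.finite_of_card_ne_zero hpos.1
    have := Nat.finite_of_card_ne_zero hpos'.1
    exact Finite.card_eq.1 (Nat.eq_of_mul_eq_mul_right (Nat.pos_of_ne_zero hpos.2)
      (hcard.trans hcard'.symm))
  exact hs.exists_equiv hs' (Equiv.ofFiberEquiv fun c => (hfiber c).some)
    (Equiv.ofFiberEquiv_map _)

theorem card_fiber_smul (π : E →[G] B) (g : G) (b : B) :
    Nat.card {e // π e = g • b} = Nat.card {e // π e = b} :=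
  (Nat.card_congr ((MulAction.toPerm g).subtypeEquiv fun e => by
    rw [MulAction.toPerm_apply, map_smul, smul_left_cancel_iff])).symm

instance {Ω : Type*} {F : Ω → Type*} [∀ ω, MulAction G (F ω)] [∀ ω, IsCancelSMul G (F ω)] :
    IsCancelSMul G (Σ ω, F ω) :=
  isCancelSMul_iff_eq_one_of_smul_eq.2 fun _ _ h =>
    IsCancelSMul.eq_one_of_smul (eq_of_heq (Sigma.ext_iff.1 h).2)

theorem exists_free_cover_of_card_stabilizer_dvd {B : Type w} [MulAction G B] {n : ℕ}
    (hn : ∀ b : B, Nat.card (MulAction.stabilizer G b) ∣ n) :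
    ∃ (Ω : Type w) (π : (Σ _ : Ω, G) →[G] B), ∀ b, Nat.card {e // π e = b} = n := by
  let Ω := Σ c : MulAction.orbitRel.Quotient G B, Fin (n / Nat.card (MulAction.stabilizer G c.out))
  let π : (Σ _ : Ω, G) →[G] B := ⟨fun e => e.2 • e.1.1.out, fun g e => mul_smul g e.2 _⟩
  have hbasis : IsFreeBasis π (fun ω => ⟨ω, 1⟩) Sigma.fst := by
    refine ⟨fun ω => one_smul G _, ?_⟩
    convert (Equiv.sigmaEquivProd Ω G).symm.bijective using 1
    ext x : 1
    exact Sigma.ext rfl (heq_of_eq (mul_one x.2))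
  refine ⟨Ω, π, fun b => ?_⟩
  obtain ⟨g, hg⟩ := MulAction.orbitRel_apply.1
    (Quotient.exact (⟦b⟧ : MulAction.orbitRel.Quotient G B).out_eq.symm)
  rw [← hg, card_fiber_smul, hbasis.card_fiber, Nat.card_congr (Equiv.sigmaSubtype _),
    Nat.card_fin, Nat.div_mul_cancel (hn _)]

end FreeActions

section Covers

variable {G V E B : Type*} [Group G] [MulAction G V] [MulAction G E] [MulAction G B]

/-- The pullback of the `G`-set `E` over `V` along an equivariant map `f : B → V`. -/
def equivariantPullback (f : B →[G] V) (π : E →[G] V) : SubMulAction G (B × E) where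
  carrier := {x | f x.1 = π x.2}
  smul_mem' g x hx := by
    simpa only [Set.mem_ofPred_eq, Prod.smul_fst, Prod.smul_snd, map_smul, smul_left_cancel_iff]
      using hx

namespace equivariantPullback

variable (f : B →[G] V) (π : E →[G] V)

/-- The projection of the pullback to its base. -/
def proj : equivariantPullback f π →[G] B := ⟨fun x => x.1.1, fun _ _ => rfl⟩

instance [IsCancelSMul G E] : IsCancelSMul G (equivariantPullback f π) :=
  isCancelSMul_iff_eq_one_of_smul_eq.2 fun _ x h =>
    IsCancelSMul.eq_one_of_smul (x := x.1.2) (congrArg (fun y => y.1.2) h)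

/-- The fibres of the pullback are those of the original `G`-set. -/
def fiberEquiv (b : B) : {x // proj f π x = b} ≃ {e // π e = f b} where
  toFun x := ⟨x.1.1.2, x.1.2.symm.trans (congrArg f x.2)⟩
  invFun e := ⟨⟨(b, e.1), e.2.symm⟩, rfl⟩
  left_inv := by
    rintro ⟨x, rfl⟩
    rfl
  right_inv _ := rfl

end equivariantPullback

theorem exists_equivariant_transport [IsCancelSMul G E] (π : E →[G] V) {n : ℕ} (hn : n ≠ 0)
    (hπ : ∀ v, Nat.card {e // π e = v} = n) (f₁ f₂ : B →[G] V) :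
    ∃ R : B → E → E → Prop,
      (∀ (g : G) b e e', R b e e' → R (g • b) (g • e) (g • e')) ∧
      (∀ b e e', R b e e' → π e = f₁ b ∧ π e' = f₂ b) ∧
      (∀ b e, π e = f₁ b → ∃! e', R b e e') ∧ ∀ b e', π e' = f₂ b → ∃! e, R b e e' := by
  obtain ⟨φ, hsmul, hproj⟩ := exists_equiv_of_card_fiber_eq (equivariantPullback.proj f₁ π)
    (equivariantPullback.proj f₂ π) hn
    (fun b => (Nat.card_congr (equivariantPullback.fiberEquiv f₁ π b)).trans (hπ _))
    (fun b => (Nat.card_congr (equivariantPullback.fiberEquiv f₂ π b)).trans (hπ _))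
  refine ⟨fun b e e' => ∃ (h : f₁ b = π e) (h' : f₂ b = π e'), φ ⟨(b, e), h⟩ = ⟨(b, e'), h'⟩,
    ?_, fun b e e' h => ⟨h.1.symm, h.2.1.symm⟩, fun b e h => ?_, fun b e' h => ?_⟩
  · rintro g b e e' ⟨h, h', hφ⟩
    exact ⟨(g • (⟨(b, e), h⟩ : equivariantPullback f₁ π)).2,
      (g • (⟨(b, e'), h'⟩ : equivariantPullback f₂ π)).2,
      (hsmul g ⟨(b, e), h⟩).trans (congrArg (g • ·) hφ)⟩
  · obtain ⟨⟨⟨b', e'⟩, h'⟩, hφ⟩ : ∃ x, φ ⟨(b, e), h.symm⟩ = x := ⟨_, rfl⟩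
    obtain rfl : b' = b := (congrArg (equivariantPullback.proj f₂ π) hφ).symm.trans (hproj _)
    exact ⟨e', ⟨h.symm, h', hφ⟩, fun e'' ⟨_, _, hφ'⟩ =>
      congrArg (fun x => x.1.2) (hφ'.symm.trans hφ)⟩
  · obtain ⟨⟨⟨b', e⟩, he⟩, hφ⟩ := φ.surjective ⟨(b, e'), h.symm⟩
    obtain rfl : b' = b := (hproj _).symm.trans (congrArg (equivariantPullback.proj f₂ π) hφ)
    exact ⟨e, ⟨he, h.symm, hφ⟩, fun e'' ⟨_, _, hφ'⟩ =>
      congrArg (fun x => x.1.2) (φ.injective (hφ'.trans hφ.symm))⟩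

/-- The graph `Ê` on the `G`-set `E` is a `G`-equivariant covering of the graph `T` via `π`. -/
structure IsEquivariantCover (π : E →[G] V) (Ê : SimpleGraph E) (T : SimpleGraph V) : Prop where
  smul_adj : ∀ (g : G) e e', Ê.Adj e e' → Ê.Adj (g • e) (g • e')
  map_adj : ∀ e e', Ê.Adj e e' → T.Adj (π e) (π e')
  existsUnique_lift : ∀ e v, T.Adj (π e) v → ∃! e', π e' = v ∧ Ê.Adj e e'

namespace IsEquivariantCover

variable {π : E →[G] V} {Ê : SimpleGraph E} {T : SimpleGraph V}

theorem exists_reachable_of_walk (hÊ : IsEquivariantCover π Ê T) {v w : V} (p : T.Walk v w) :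
    ∀ e, π e = v → ∃ e', π e' = w ∧ Ê.Reachable e e' := by
  induction p with
  | nil => exact fun e he => ⟨e, he, .rfl⟩
  | cons hadj _ ih =>
    rintro e rfl
    obtain ⟨e₁, ⟨he₁, hadj₁⟩, -⟩ := hÊ.existsUnique_lift e _ hadj
    obtain ⟨e', he', hreach⟩ := ih e₁ he₁
    exact ⟨e', he', hadj₁.reachable.trans hreach⟩

theorem eq_of_reachable (hÊ : IsEquivariantCover π Ê T) (hT : T.IsAcyclic) {e e' : E}
    (hreach : Ê.Reachable e e') (heq : π e = π e') : e = e' :=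
  eq_of_reachable_of_map_eq hT ⟨π, fun {_ _} => hÊ.map_adj _ _⟩
    (fun a b _ hab hac hbc => (hÊ.existsUnique_lift a (π b) (hÊ.map_adj a b hab)).unique
      ⟨rfl, hab⟩ ⟨hbc.symm, hac⟩) hreach heq

theorem finite_connectedComponent (hÊ : IsEquivariantCover π Ê T) (hT : T.Connected) (v : V)
    [Finite {e // π e = v}] : Finite Ê.ConnectedComponent := by
  refine Finite.of_surjective (fun e : {e // π e = v} => Ê.connectedComponentMk e.1)
    (SimpleGraph.ConnectedComponent.ind fun e => ?_)
  obtain ⟨e', he', hreach⟩ := hÊ.exists_reachable_of_walk (hT (π e) v).some e rfl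
  exact ⟨⟨e', he'⟩, SimpleGraph.ConnectedComponent.sound hreach.symm⟩

/-- The action of `G` on the connected components of a `G`-equivariant covering graph. -/
abbrev connectedComponentAction (hÊ : IsEquivariantCover π Ê T) :
    MulAction G Ê.ConnectedComponent where
  smul g := SimpleGraph.ConnectedComponent.map ⟨(g • ·), hÊ.smul_adj g _ _⟩
  one_smul := SimpleGraph.ConnectedComponent.ind fun e =>
    congrArg Ê.connectedComponentMk (one_smul G e)
  mul_smul g h := SimpleGraph.ConnectedComponent.ind fun e =>
    congrArg Ê.connectedComponentMk (mul_smul g h e)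

theorem exists_finiteIndex_isCancelSMul [IsCancelSMul G E] (hÊ : IsEquivariantCover π Ê T)
    (hT : T.IsTree) (hfin : ∀ v, Finite {e // π e = v}) (hsurj : Function.Surjective π) :
    ∃ H : Subgroup G, H.FiniteIndex ∧ IsCancelSMul H V := by
  let := hÊ.connectedComponentAction
  obtain ⟨v₀⟩ := hT.connected.nonempty
  have := hfin v₀
  have := hÊ.finite_connectedComponent hT.connected v₀
  refine ⟨(MulAction.toPermHom G Ê.ConnectedComponent).ker, Subgroup.finiteIndex_ker _,
    isCancelSMul_iff_eq_one_of_smul_eq.2 fun ⟨k, hk⟩ v hkv => ?_⟩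
  obtain ⟨e, rfl⟩ := hsurj v
  have hcomp : Ê.connectedComponentMk (k • e) = Ê.connectedComponentMk e :=
    Equiv.congr_fun hk (Ê.connectedComponentMk e)
  have hke : k • e = e := hÊ.eq_of_reachable hT.isAcyclic
    (SimpleGraph.ConnectedComponent.exact hcomp) ((map_smul π k e).trans hkv)
  exact Subtype.ext (IsCancelSMul.eq_one_of_smul hke)

end IsEquivariantCover

end Covers

section HasseTrees

variable {G V : Type*} [Group G] [PartialOrder V] [MulAction G V]
  [CovariantClass G V (· • ·) (· ≤ ·)]

theorem smul_covBy_smul (g : G) {a b : V} (hab : a ⋖ b) : g • a ⋖ g • b :=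
  (apply_covBy_apply_iff ((MulAction.toPerm g).toOrderIso (smul_mono_right g)
    (smul_mono_right g⁻¹))).2 hab

variable (G V) in
/-- The edges of the Hasse diagram of `V`, oriented upwards, as a `G`-set. -/
def hasseEdges : SubMulAction G (V × V) where
  carrier := {d | d.1 ⋖ d.2}
  smul_mem' g _ hd := smul_covBy_smul g hd

theorem exists_isEquivariantCover_hasse {E : Type*} [MulAction G E] [IsCancelSMul G E]
    (π : E →[G] V) {n : ℕ} (hn : n ≠ 0) (hπ : ∀ v, Nat.card {e // π e = v} = n) :
    ∃ Ê : SimpleGraph E, IsEquivariantCover π Ê (SimpleGraph.hasse V) := by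
  obtain ⟨R, hsmul, hend, hup, hdown⟩ := exists_equivariant_transport π hn hπ
    (⟨fun d => d.1.1, fun _ _ => rfl⟩ : hasseEdges G V →[G] V)
    (⟨fun d => d.1.2, fun _ _ => rfl⟩ : hasseEdges G V →[G] V)
  have hcov : ∀ d e e', R d e e' → π e ⋖ π e' := fun d e e' h => by
    rw [(hend d e e' h).1, (hend d e e' h).2]
    exact d.2
  have hedge : ∀ d e e', R d e e' → d.1 = (π e, π e') := fun d e e' h =>
    Prod.ext (hend d e e' h).1.symm (hend d e e' h).2.symm
  refine ⟨⟨fun e e' => ∃ d, R d e e' ∨ R d e' e, ⟨fun e e' ⟨d, h⟩ => ⟨d, h.symm⟩⟩,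
    ⟨fun e ⟨d, h⟩ => (hcov d e e (h.elim id id)).ne rfl⟩⟩,
    fun g e e' ⟨d, h⟩ => ⟨g • d, h.imp (hsmul g d e e') (hsmul g d e' e)⟩,
    fun e e' ⟨d, h⟩ => h.imp (hcov d e e') (hcov d e' e), ?_⟩
  rintro e v (hev | hve)
  · obtain ⟨e', he', huniq⟩ := hup ⟨(π e, v), hev⟩ e rfl
    refine ⟨e', ⟨(hend _ _ _ he').2, _, .inl he'⟩, ?_⟩
    rintro e'' ⟨rfl, d, h | h⟩
    · obtain rfl : d = ⟨(π e, π e''), hev⟩ := Subtype.ext (hedge d e e'' h)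
      exact huniq e'' h
    · exact absurd hev.lt (hcov d e'' e h).lt.asymm
  · obtain ⟨e', he', huniq⟩ := hdown ⟨(v, π e), hve⟩ e rfl
    refine ⟨e', ⟨(hend _ _ _ he').1, _, .inr he'⟩, ?_⟩
    rintro e'' ⟨rfl, d, h | h⟩
    · exact absurd hve.lt (hcov d e e'' h).lt.asymm
    · obtain rfl : d = ⟨(π e'', π e), hve⟩ := Subtype.ext (hedge d e'' e h)
      exact huniq e'' h

theorem exists_finiteIndex_isCancelSMul_of_isTree_hasse (hT : (SimpleGraph.hasse V).IsTree) {n : ℕ}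
    (hn : n ≠ 0) (hstab : ∀ v : V, Nat.card (MulAction.stabilizer G v) ∣ n) :
    ∃ H : Subgroup G, H.FiniteIndex ∧ IsCancelSMul H V := by
  obtain ⟨Ω, π, hπ⟩ := exists_free_cover_of_card_stabilizer_dvd hstab
  obtain ⟨Ê, hÊ⟩ := exists_isEquivariantCover_hasse π hn hπ
  have hpos : ∀ v, Nat.card {e // π e = v} ≠ 0 := fun v => (hπ v).trans_ne hn
  refine hÊ.exists_finiteIndex_isCancelSMul hT (fun v => Nat.finite_of_card_ne_zero (hpos v))
    fun v => ?_
  have := (Nat.card_ne_zero.1 (hpos v)).1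
  exact this.elim fun e => ⟨e.1, e.2⟩

end HasseTrees

section FreeActionsOnTrees

variable {G V : Type*} [Group G] [PartialOrder V] [MulAction G V]
  [CovariantClass G V (· • ·) (· ≤ ·)]

open Classical in
variable (G) in
/-- The letter read along a dart of the Hasse diagram: the `G`-orbit of its edge, with exponent
`true` if the dart goes up and `false` if it goes down. -/
noncomputable def hasseLetter (d : (SimpleGraph.hasse V).Dart) :
    MulAction.orbitRel.Quotient G (hasseEdges G V) × Bool :=
  if h : d.fst ⋖ d.snd then (⟦⟨(d.fst, d.snd), h⟩⟧, true)
  else (⟦⟨(d.snd, d.fst), d.adj.resolve_left h⟩⟧, false)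

theorem hasseLetter_of_up {v w : V} (h : v ⋖ w) :
    hasseLetter G ⟨(v, w), .inl h⟩ = (⟦⟨(v, w), h⟩⟧, true) :=
  dif_pos h

theorem hasseLetter_of_down {v w : V} (h : w ⋖ v) :
    hasseLetter G ⟨(v, w), .inr h⟩ = (⟦⟨(w, v), h⟩⟧, false) :=
  dif_neg fun h' => h.lt.asymm h'.lt

theorem hasseLetter_symm (d : (SimpleGraph.hasse V).Dart) :
    hasseLetter G d.symm = ((hasseLetter G d).1, !(hasseLetter G d).2) := by
  obtain ⟨⟨v, w⟩, h | h⟩ := d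
  · exact (hasseLetter_of_down h).trans (by rw [hasseLetter_of_up h]; rfl)
  · exact (hasseLetter_of_up h).trans (by rw [hasseLetter_of_down h]; rfl)

theorem hasseLetter_smul (g : G) {v w : V} (h : (SimpleGraph.hasse V).Adj v w)
    (hg : (SimpleGraph.hasse V).Adj (g • v) (g • w)) :
    hasseLetter G ⟨(g • v, g • w), hg⟩ = hasseLetter G ⟨(v, w), h⟩ := by
  obtain h | h := h
  · rw [hasseLetter_of_up h, hasseLetter_of_up (smul_covBy_smul g h)]
    exact congrArg (·, true) (Quotient.sound (MulAction.orbitRel_apply.2 ⟨g, rfl⟩))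
  · rw [hasseLetter_of_down h, hasseLetter_of_down (smul_covBy_smul g h)]
    exact congrArg (·, false) (Quotient.sound (MulAction.orbitRel_apply.2 ⟨g, rfl⟩))

theorem hasseLetter_snd_eq [IsCancelSMul G V] {u v w : V} (h : (SimpleGraph.hasse V).Adj u v)
    (h' : (SimpleGraph.hasse V).Adj v w) (huw : u ≠ w)
    (heq : (hasseLetter G ⟨(u, v), h⟩).1 = (hasseLetter G ⟨(v, w), h'⟩).1) :
    (hasseLetter G ⟨(u, v), h⟩).2 = (hasseLetter G ⟨(v, w), h'⟩).2 := by
  obtain h | h := h <;> obtain h' | h' := h'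
  · rw [hasseLetter_of_up h, hasseLetter_of_up h']
  · rw [hasseLetter_of_up h, hasseLetter_of_down h'] at heq
    obtain ⟨g, hg⟩ := MulAction.orbitRel_apply.1 (Quotient.exact heq)
    have hv : g • v = v := congrArg (fun d => d.1.2) hg
    have hw : g • w = u := congrArg (fun d => d.1.1) hg
    rw [IsCancelSMul.eq_one_of_smul hv, one_smul] at hw
    exact absurd hw.symm huw
  · rw [hasseLetter_of_down h, hasseLetter_of_up h'] at heq
    obtain ⟨g, hg⟩ := MulAction.orbitRel_apply.1 (Quotient.exact heq)
    have hv : g • v = v := congrArg (fun d => d.1.1) hg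
    have hw : g • w = u := congrArg (fun d => d.1.2) hg
    rw [IsCancelSMul.eq_one_of_smul hv, one_smul] at hw
    exact absurd hw.symm huw
  · rw [hasseLetter_of_down h, hasseLetter_of_down h']

theorem isReduced_map_hasseLetter [IsCancelSMul G V] {v w : V} (p : (SimpleGraph.hasse V).Walk v w)
    (hp : p.edges.IsChain (· ≠ ·)) : FreeGroup.IsReduced (p.darts.map (hasseLetter G)) := by
  induction p with
  | nil => exact .nil
  | cons h p ih =>
    cases p with
    | nil => exact .singleton
    | cons h' p =>
      simp only [SimpleGraph.Walk.edges_cons, SimpleGraph.Walk.darts_cons, List.map_cons,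
        List.isChain_cons_cons, FreeGroup.isReduced_cons_cons] at hp ih ⊢
      exact ⟨hasseLetter_snd_eq h h' fun heq => hp.1 (heq ▸ Sym2.eq_swap), ih hp.2⟩

theorem prod_map_mk_singleton {α : Type*} (l : List (α × Bool)) :
    (l.map fun a => FreeGroup.mk [a]).prod = FreeGroup.mk l := by
  induction l with
  | nil => rfl
  | cons a l ih => rw [List.map_cons, List.prod_cons, ih, FreeGroup.mul_mk, List.singleton_append]

omit [PartialOrder V] [CovariantClass G V (· • ·) (· ≤ ·)] in
theorem exists_monoidHom_of_potential {M : Type*} [Group M] {T : SimpleGraph V} (hT : T.Connected)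
    (U : V → M) (hU : ∀ (g : G) v w, T.Adj v w → (U (g • v))⁻¹ * U (g • w) = (U v)⁻¹ * U w) :
    ∃ ψ : G →* M, ∀ g v, U (g • v) = ψ g * U v := by
  have hconst : ∀ g v w, U (g • v) * (U v)⁻¹ = U (g • w) * (U w)⁻¹ := fun g v w => by
    obtain ⟨p⟩ := hT v w
    induction p with
    | nil => rfl
    | cons h p ih =>
      rw [← ih, inv_mul_eq_iff_eq_mul.1 (hU g _ _ h)]
      group
  obtain ⟨v₀⟩ := hT.nonempty
  refine ⟨MonoidHom.mk' (fun g => U (g • v₀) * (U v₀)⁻¹) fun g h => ?_, fun g v => ?_⟩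
  · rw [hconst g v₀ (h • v₀), ← mul_smul, mul_assoc, inv_mul_cancel_left]
  · exact eq_mul_of_mul_inv_eq (hconst g v v₀)

theorem isFreeGroup_of_isTree_hasse [IsCancelSMul G V] (hT : (SimpleGraph.hasse V).IsTree) :
    IsFreeGroup G := by
  let τ : (SimpleGraph.hasse V).Dart → FreeGroup (MulAction.orbitRel.Quotient G (hasseEdges G V)) :=
    fun d => FreeGroup.mk [hasseLetter G d]
  obtain ⟨U, hU⟩ := exists_potential_of_isTree hT τ fun d => by
    simp [τ, hasseLetter_symm, FreeGroup.inv_mk, FreeGroup.invRev]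
  obtain ⟨ψ, hψ⟩ := exists_monoidHom_of_potential (G := G) hT.connected U fun g v w h => by
    rw [hU ⟨(v, w), h⟩, hU ⟨(g • v, g • w), h.imp (smul_covBy_smul g) (smul_covBy_smul g)⟩,
      inv_mul_cancel_left, inv_mul_cancel_left]
    exact congrArg (fun a => FreeGroup.mk [a]) (hasseLetter_smul g h _)
  have hinj : Function.Injective ψ := (injective_iff_map_eq_one ψ).2 fun g hg => by
    obtain ⟨v⟩ := hT.connected.nonempty
    obtain ⟨p, hp, -⟩ := hT.existsUnique_path v (g • v)
    have hword : FreeGroup.mk (p.darts.map (hasseLetter G)) = 1 := by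
      have := potential_walk hU p
      rw [hψ, hg, one_mul, left_eq_mul] at this
      rw [← prod_map_mk_singleton, List.map_map]
      exact this
    have hred := isReduced_map_hasseLetter (G := G) p ((hT.isAcyclic.isPath_iff_isChain p).1 hp)
    classical
    have hnil : p.darts.map (hasseLetter G) = [] := by
      rw [← hred.reduce_eq, ← FreeGroup.toWord_mk, hword, FreeGroup.toWord_one]
    rw [List.map_eq_nil_iff, SimpleGraph.Walk.darts_eq_nil] at hnil
    exact IsCancelSMul.eq_one_of_smul hnil.eq.symm
  exact IsFreeGroup.ofMulEquiv (MonoidHom.ofInjective hinj).symm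

theorem exists_finiteIndex_isFreeGroup_of_isTree_hasse (hT : (SimpleGraph.hasse V).IsTree) {n : ℕ}
    (hn : n ≠ 0) (hstab : ∀ v : V, Nat.card (MulAction.stabilizer G v) ∣ n) :
    ∃ H : Subgroup G, H.FiniteIndex ∧ IsFreeGroup H := by
  obtain ⟨H, hfin, hfree⟩ := exists_finiteIndex_isCancelSMul_of_isTree_hasse hT hn hstab
  have : CovariantClass H V (· • ·) (· ≤ ·) := ⟨fun g _ _ h => smul_mono_right (g : G) h⟩
  exact ⟨H, hfin, isFreeGroup_of_isTree_hasse hT⟩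

end FreeActionsOnTrees

section Pregroups

open scoped Pointwise

variable {G M : Type*} [Group G] [Group M] {P : Set G}

theorem exists_contraction_of_not_isReducedProd {l : List G} (hne : l ≠ [])
    (hl : ∀ x ∈ l, x ∈ P) (h : ¬IsReducedProd P l) :
    ∃ l₁ a b l₂, l = l₁ ++ a :: b :: l₂ ∧ a * b ∈ P := by
  obtain ⟨i, hi, hmem⟩ :
      ∃ i : ℕ, ∃ h : i + 1 < l.length, l[i]'(Nat.lt_of_succ_lt h) * l[i + 1]'h ∈ P := by
    by_contra! H
    exact h ⟨hne, hl, H⟩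
  refine ⟨l.take i, _, _, l.drop (i + 2), ?_, hmem⟩
  rw [← List.drop_eq_getElem_cons, ← List.drop_eq_getElem_cons, List.take_append_drop]

theorem contraction_induction {motive : List G → Prop} (nil : motive [])
    (reduced : ∀ l, IsReducedProd P l → motive l)
    (contract : ∀ l₁ a b l₂, (∀ x ∈ l₁ ++ a :: b :: l₂, x ∈ P) → a * b ∈ P →
      motive (l₁ ++ (a * b) :: l₂) → motive (l₁ ++ a :: b :: l₂))
    (l : List G) (hl : ∀ x ∈ l, x ∈ P) : motive l := by
  induction hn : l.length generalizing l with
  | zero => rwa [List.length_eq_zero_iff.1 hn]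
  | succ n ih =>
    by_cases hred : IsReducedProd P l
    · exact reduced l hred
    have hne : l ≠ [] := fun h => by simp [h] at hn
    obtain ⟨l₁, a, b, l₂, rfl, hab⟩ := exists_contraction_of_not_isReducedProd hne hl hred
    refine contract l₁ a b l₂ hl hab (ih _ (fun x hx => ?_) (by simp at hn ⊢; omega))
    rcases List.mem_append.1 hx with hx | hx
    · exact hl x (by simp [hx])
    · rcases List.mem_cons.1 hx with rfl | hx
      · exact hab
      · exact hl x (by simp [hx])

/-- Adjacency in the Cayley graph of `G` with respect to `P`, with a loop at every vertex when
`1 ∈ P`. -/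
def PAdj (P : Set G) (g h : G) : Prop := g⁻¹ * h ∈ P

theorem PAdj.mul_right {u : G} (hu : u ∈ P) (g : G) : PAdj P g (g * u) := by
  simpa [PAdj] using hu

@[simp]
theorem pAdj_mul_left_iff (k g h : G) : PAdj P (k * g) (k * h) ↔ PAdj P g h := by
  simp [PAdj, mul_assoc]

/-- The product of the weights `θ` along the path that starts at `g` and reads the word `l`. -/
def holonomy (θ : G → G → M) : G → List G → M
  | _, [] => 1
  | g, u :: l => θ g (g * u) * holonomy θ (g * u) l

theorem holonomy_append (θ : G → G → M) (g : G) (l l' : List G) :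
    holonomy θ g (l ++ l') = holonomy θ g l * holonomy θ (g * l.prod) l' := by
  induction l generalizing g with
  | nil => simp [holonomy]
  | cons u l ih => simp [holonomy, ih, mul_assoc]

/-- The closure of an edge: all vertices adjacent to every common neighbour of its endpoints. -/
def edgeClosure (P : Set G) (g h : G) : Set G := {k | ∀ m, PAdj P g m → PAdj P h m → PAdj P k m}

theorem left_mem_edgeClosure (g h : G) : g ∈ edgeClosure P g h := fun _ hg _ => hg

theorem right_mem_edgeClosure (g h : G) : h ∈ edgeClosure P g h := fun _ _ hh => hh

theorem edgeClosure_subset_edgeClosure {g h k l : G} (hk : k ∈ edgeClosure P g h)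
    (hl : l ∈ edgeClosure P g h) : edgeClosure P k l ⊆ edgeClosure P g h :=
  fun _ hm n hgn hhn => hm n (hk n hgn hhn) (hl n hgn hhn)

theorem smul_edgeClosure (k g h : G) :
    k • edgeClosure P g h = edgeClosure P (k * g) (k * h) := by
  ext x
  rw [Set.mem_smul_set_iff_inv_smul_mem]
  refine ((Equiv.mulLeft k).forall_congr fun m => ?_).trans Iff.rfl
  simp [← pAdj_mul_left_iff (P := P) k (k⁻¹ * x) m]

/-- The vertices of the tree of a pregroup: the closures of the edges of the Cayley graph,
ordered by inclusion. -/
def EdgeClosure (P : Set G) : Type _ :=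
  {C : Set G // ∃ g h, PAdj P g h ∧ C = edgeClosure P g h}

namespace EdgeClosure

instance : SetLike (EdgeClosure P) G := ⟨Subtype.val, Subtype.val_injective⟩

instance : PartialOrder (EdgeClosure P) := .ofSetLike (EdgeClosure P) G

/-- The closure of the edge `(g, h)` as a vertex of the tree. -/
def mk {g h : G} (hgh : PAdj P g h) : EdgeClosure P := ⟨edgeClosure P g h, g, h, hgh, rfl⟩

instance : MulAction G (EdgeClosure P) where
  smul k C := ⟨k • (C : Set G), by
    obtain ⟨g, h, hgh, hC⟩ := C.2
    exact ⟨k * g, k * h, by simpa using hgh, (congrArg (k • ·) hC).trans (smul_edgeClosure k g h)⟩⟩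
  one_smul C := SetLike.coe_injective (one_smul G (C : Set G))
  mul_smul k l C := SetLike.coe_injective (mul_smul k l (C : Set G))

@[simp]
theorem coe_smul (k : G) (C : EdgeClosure P) :
    ((k • C : EdgeClosure P) : Set G) = k • (C : Set G) :=
  rfl

instance : CovariantClass G (EdgeClosure P) (· • ·) (· ≤ ·) :=
  ⟨fun _ _ _ h => Set.smul_set_mono h⟩

theorem nonempty (C : EdgeClosure P) : ∃ g, g ∈ C := by
  obtain ⟨_, g, h, _, rfl⟩ := C
  exact ⟨g, left_mem_edgeClosure g h⟩

theorem edgeClosure_subset (C : EdgeClosure P) {g h : G} (hg : g ∈ C) (hh : h ∈ C) :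
    edgeClosure P g h ⊆ C := by
  obtain ⟨_, _, _, _, rfl⟩ := C
  exact edgeClosure_subset_edgeClosure hg hh

end EdgeClosure

namespace IsPregroupStructure

variable (hP : IsPregroupStructure P)
include hP

theorem exists_forall_mem_prod_eq (g : G) : ∃ l : List G, (∀ x ∈ l, x ∈ P) ∧ l.prod = g := by
  obtain ⟨l, hl, hlg⟩ := hP.exists_rep g
  exact ⟨l, hl.2.1, hlg⟩

theorem isReducedProd_one : IsReducedProd P [1] :=
  ⟨by simp, by simpa using hP.one_mem, fun i h => by simp at h⟩

theorem eq_one_of_isReducedProd_of_prod_eq_one {l : List G} (hl : IsReducedProd P l)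
    (hl1 : l.prod = 1) : l = [1] := by
  obtain ⟨a, rfl⟩ := List.length_eq_one_iff.1
    (hP.uniq l [1] hl hP.isReducedProd_one (by simpa using hl1)).1
  simpa using hl1

theorem pAdj_refl (g : G) : PAdj P g g := by
  simpa [PAdj] using hP.one_mem

theorem pAdj_symm {g h : G} (hgh : PAdj P g h) : PAdj P h g := by
  simpa [PAdj] using hP.inv_mem _ hgh

theorem holonomy_eq_one {θ : G → G → M}
    (hθ : ∀ g h k, PAdj P g h → PAdj P h k → PAdj P g k → θ g h * θ h k = θ g k)
    (g : G) {l : List G} (hl : ∀ x ∈ l, x ∈ P) (hl1 : l.prod = 1) : holonomy θ g l = 1 := by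
  refine contraction_induction (motive := fun l => l.prod = 1 → holonomy θ g l = 1) (fun _ => rfl)
    (fun l hl hl1 => ?_) (fun l₁ a b l₂ hl hab ih hl1 => ?_) l hl hl1
  · have hloop := hP.pAdj_refl g
    simpa [hP.eq_one_of_isReducedProd_of_prod_eq_one hl hl1, holonomy] using
      hθ g g g hloop hloop hloop
  · rw [← ih (by simpa [mul_assoc] using hl1), holonomy_append, holonomy_append]
    have ha : a ∈ P := hl a (by simp)
    have hb : b ∈ P := hl b (by simp)
    have hθab := hθ _ _ _ (.mul_right ha (g * l₁.prod)) (.mul_right hb _)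
      (by rw [mul_assoc _ a b]; exact .mul_right hab _)
    simp only [holonomy, ← mul_assoc] at hθab ⊢
    rw [mul_assoc (holonomy θ g l₁), hθab]

theorem exists_potential {θ : G → G → M}
    (hθ : ∀ g h k, PAdj P g h → PAdj P h k → PAdj P g k → θ g h * θ h k = θ g k) :
    ∃ U : G → M, ∀ g h, PAdj P g h → U h = U g * θ g h := by
  choose L hL hLprod using hP.exists_forall_mem_prod_eq
  have path_indep {l l' : List G} (hl : ∀ x ∈ l, x ∈ P) (hl' : ∀ x ∈ l', x ∈ P)
      (h : l.prod = l'.prod) : holonomy θ 1 l = holonomy θ 1 l' := by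
    have close {r : List G} (hr : ∀ x ∈ r, x ∈ P) (hrl : r.prod = l.prod) :
        holonomy θ 1 r * holonomy θ l.prod (L l.prod⁻¹) = 1 := by
      have hmem : ∀ x ∈ r ++ L l.prod⁻¹, x ∈ P := List.forall_mem_append.2 ⟨hr, hL _⟩
      simpa [holonomy_append, hrl] using hP.holonomy_eq_one hθ 1 hmem (by simp [hrl, hLprod])
    exact mul_right_cancel ((close hl rfl).trans (close hl' h.symm).symm)
  refine ⟨fun g => holonomy θ 1 (L g), fun g h hgh => ?_⟩
  have hmem : ∀ x ∈ L g ++ [g⁻¹ * h], x ∈ P :=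
    List.forall_mem_append.2 ⟨hL g, List.forall_mem_singleton.2 hgh⟩
  simp [path_indep (hL h) hmem (by simp [hLprod]), holonomy_append, holonomy, hLprod]

theorem pAdj_or_pAdj_of_path {v a b c d : G} (va : PAdj P v a) (vb : PAdj P v b)
    (vc : PAdj P v c) (vd : PAdj P v d) (ab : PAdj P a b) (bc : PAdj P b c) (cd : PAdj P c d) :
    PAdj P a c ∨ PAdj P b d := by
  have := hP.p5 (a⁻¹ * b) ab (b⁻¹ * v) (hP.pAdj_symm vb) (v⁻¹ * c) vc (c⁻¹ * d) cd
    (by simpa [mul_assoc, PAdj] using hP.pAdj_symm va) (by simpa [mul_assoc, PAdj] using bc)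
    (by simpa [mul_assoc, PAdj] using vd)
  simpa [mul_assoc, PAdj] using this

theorem mem_edgeClosure_or_mem_edgeClosure {g b c : G} (gb : PAdj P g b) (gc : PAdj P g c)
    (bc : PAdj P b c) : c ∈ edgeClosure P g b ∨ b ∈ edgeClosure P g c := by
  by_contra! h
  simp only [edgeClosure, Set.mem_ofPred_eq, not_forall] at h
  obtain ⟨⟨p, gp, bp, hcp⟩, ⟨q, gq, cq, hbq⟩⟩ := h
  rcases hP.pAdj_or_pAdj_of_path gp gb gc gq (hP.pAdj_symm bp) bc cq with hpc | hbq'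
  · exact hcp (hP.pAdj_symm hpc)
  · exact hbq hbq'

theorem pAdj_of_mem (C : EdgeClosure P) {k l : G} (hk : k ∈ C) (hl : l ∈ C) : PAdj P k l := by
  obtain ⟨_, g, h, hgh, rfl⟩ := C
  have hgl : PAdj P g l := hP.pAdj_symm (hl g (hP.pAdj_refl g) (hP.pAdj_symm hgh))
  have hhl : PAdj P h l := hP.pAdj_symm (hl h hgh (hP.pAdj_refl h))
  exact hk l hgl hhl

theorem exists_edgeClosure_of_pAdj {g h k : G} (gh : PAdj P g h) (hk : PAdj P h k)
    (gk : PAdj P g k) : ∃ C : EdgeClosure P, g ∈ C ∧ h ∈ C ∧ k ∈ C := by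
  rcases hP.mem_edgeClosure_or_mem_edgeClosure gh gk hk with hmem | hmem
  · exact ⟨.mk gh, left_mem_edgeClosure _ _, right_mem_edgeClosure _ _, hmem⟩
  · exact ⟨.mk gk, left_mem_edgeClosure _ _, hmem, right_mem_edgeClosure _ _⟩

theorem exists_eq_edgeClosure (C : EdgeClosure P) {g : G} (hg : g ∈ C) :
    ∃ x ∈ C, (C : Set G) = edgeClosure P g x := by
  suffices ∃ x ∈ C, (C : Set G) ⊆ edgeClosure P g x from
    this.imp fun x ⟨hx, hsub⟩ => ⟨hx, hsub.antisymm (C.edgeClosure_subset hg hx)⟩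
  obtain ⟨_, a, b, hab, rfl⟩ := C
  have ga := hP.pAdj_of_mem (.mk hab) hg (left_mem_edgeClosure a b)
  have gb := hP.pAdj_of_mem (.mk hab) hg (right_mem_edgeClosure a b)
  rcases hP.mem_edgeClosure_or_mem_edgeClosure ga gb hab with h | h
  · exact ⟨a, left_mem_edgeClosure a b,
      edgeClosure_subset_edgeClosure (right_mem_edgeClosure g a) h⟩
  · exact ⟨b, right_mem_edgeClosure a b,
      edgeClosure_subset_edgeClosure h (right_mem_edgeClosure g b)⟩

theorem le_or_le_of_mem {A B C : EdgeClosure P} (hAC : A ≤ C) (hBC : B ≤ C) {g : G}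
    (hgA : g ∈ A) (hgB : g ∈ B) : A ≤ B ∨ B ≤ A := by
  obtain ⟨x, hx, hA⟩ := hP.exists_eq_edgeClosure A hgA
  obtain ⟨y, hy, hB⟩ := hP.exists_eq_edgeClosure B hgB
  have adj {k l : G} (hk : k ∈ C) (hl : l ∈ C) : PAdj P k l := hP.pAdj_of_mem C hk hl
  rcases hP.mem_edgeClosure_or_mem_edgeClosure (adj (hAC hgA) (hAC hx)) (adj (hAC hgA) (hBC hy))
    (adj (hAC hx) (hBC hy)) with hyA | hxB
  · exact .inr (hB.trans_subset (A.edgeClosure_subset hgA (hA.symm.subset hyA)))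
  · exact .inl (hA.trans_subset (B.edgeClosure_subset hgB (hB.symm.subset hxB)))

theorem eq_of_covBy_of_covBy {A B C : EdgeClosure P} (hA : A ⋖ C) (hB : B ⋖ C) {g : G}
    (hgA : g ∈ A) (hgB : g ∈ B) : A = B := by
  rcases hP.le_or_le_of_mem hA.le hB.le hgA hgB with h | h
  · exact (hA.eq_or_eq h hB.le).resolve_right hB.ne |>.symm
  · exact (hB.eq_or_eq h hA.le).resolve_right hA.ne

theorem mem_of_covBy_of_not_le {A B C D : EdgeClosure P} (hAC : A ⋖ C) (hCD : C ≤ D)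
    (hBD : B ≤ D) (hCB : ¬C ≤ B) {g h : G} (hgA : g ∈ A) (hgB : g ∈ B) (hhB : h ∈ B) :
    h ∈ A := by
  have hBC : B ≤ C := (hP.le_or_le_of_mem hBD hCD hgB (hAC.le hgA)).resolve_right hCB
  rcases hP.le_or_le_of_mem hAC.le hBC hgA hgB with hAB | hBA
  · exact (hAC.eq_or_eq hAB hBC).elim (fun h => h ▸ hhB) fun h => absurd h.ge hCB
  · exact hBA hhB

end IsPregroupStructure

open Classical in
/-- The side of the edge `A ⋖ C` of the tree on which the vertex `D` lies, as seen from a point `g`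
of `D`. -/
noncomputable def edgeSign (A C : EdgeClosure P) (g : G) (D : Set G) : ℤˣ :=
  if g ∈ A ∧ (C : Set G) ⊆ D then -1 else 1

theorem edgeSign_of_mem_of_le {A C D : EdgeClosure P} {g : G} (hg : g ∈ A) (hCD : C ≤ D) :
    edgeSign A C g D = -1 :=
  if_pos ⟨hg, hCD⟩

theorem edgeSign_of_not_le {A C D : EdgeClosure P} (g : G) (hCD : ¬C ≤ D) :
    edgeSign A C g D = 1 :=
  if_neg fun h => hCD h.2

theorem edgeSign_congr {A C D D' : EdgeClosure P} {g g' : G}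
    (h : (g ∈ A ∧ C ≤ D) ↔ (g' ∈ A ∧ C ≤ D')) : edgeSign A C g D = edgeSign A C g' D' := by
  classical exact if_congr h rfl rfl

namespace IsPregroupStructure

variable (hP : IsPregroupStructure P)
include hP

theorem edgeSign_mul_edgeSign {A C D : EdgeClosure P} (hAC : A ⋖ C) {g h : G} (hg : g ∈ D)
    (hh : h ∈ D) :
    edgeSign A C g (edgeClosure P g h) * edgeSign A C h (edgeClosure P g h) =
      edgeSign A C g D * edgeSign A C h D := by
  let B : EdgeClosure P := .mk (hP.pAdj_of_mem D hg hh)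
  have hgB : g ∈ B := left_mem_edgeClosure g h
  have hhB : h ∈ B := right_mem_edgeClosure g h
  have hBD : B ≤ D := D.edgeClosure_subset hg hh
  change edgeSign A C g B * edgeSign A C h B = _
  by_cases hCB : C ≤ B
  · have hCD := hCB.trans hBD
    exact congrArg₂ (· * ·) (edgeSign_congr (by simp only [hCB, hCD]))
      (edgeSign_congr (by simp only [hCB, hCD]))
  · have hgh : edgeSign A C g D = edgeSign A C h D :=
      edgeSign_congr <| and_congr_left fun hCD =>
        ⟨fun hgA => hP.mem_of_covBy_of_not_le hAC hCD hBD hCB hgA hgB hhB,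
          fun hhA => hP.mem_of_covBy_of_not_le hAC hCD hBD hCB hhA hhB hgB⟩
    rw [hgh, Int.units_mul_self, edgeSign_of_not_le g hCB, edgeSign_of_not_le h hCB, one_mul]

theorem edgeSign_eq_of_covBy {A B C D : EdgeClosure P} (hAC : A ⋖ C) (hBD : B ⋖ D)
    (hne : ¬(B = A ∧ D = C)) {g : G} (hg : g ∈ B) : edgeSign A C g D = edgeSign A C g B := by
  refine edgeSign_congr (and_congr_right fun hgA => ⟨fun hCD => ?_, fun hCB => hCB.trans hBD.le⟩)
  by_contra hCB
  have hBC : B ≤ C := (hP.le_or_le_of_mem hBD.le hCD hg (hAC.le hgA)).resolve_right hCB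
  obtain rfl : C = D := (hBD.eq_or_eq hBC hCD).resolve_left fun h => hCB h.le
  exact hne ⟨hP.eq_of_covBy_of_covBy hBD hAC hg hgA, rfl⟩

theorem exists_sign_of_covBy {A C : EdgeClosure P} (hAC : A ⋖ C) :
    ∃ V : EdgeClosure P → ℤˣ, V A ≠ V C ∧ ∀ B D, B ⋖ D → ¬(B = A ∧ D = C) → V B = V D := by
  obtain ⟨U, hU⟩ := hP.exists_potential (θ := fun g h =>
      edgeSign A C g (edgeClosure P g h) * edgeSign A C h (edgeClosure P g h))
    fun g h k gh hk gk => by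
      obtain ⟨D, hg, hh, hk⟩ := hP.exists_edgeClosure_of_pAdj gh hk gk
      rw [hP.edgeSign_mul_edgeSign hAC hg hh, hP.edgeSign_mul_edgeSign hAC hh hk,
        hP.edgeSign_mul_edgeSign hAC hg hk, mul_assoc, ← mul_assoc (edgeSign A C h D),
        Int.units_mul_self, one_mul]
  choose base hbase using EdgeClosure.nonempty (P := P)
  have hV (D : EdgeClosure P) {g : G} (hg : g ∈ D) :
      edgeSign A C (base D) D * U (base D) = edgeSign A C g D * U g := by
    rw [hU _ _ (hP.pAdj_of_mem D (hbase D) hg), hP.edgeSign_mul_edgeSign hAC (hbase D) hg,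
      mul_left_comm _ (U _), mul_left_comm _ (edgeSign A C (base D) D), Int.units_mul_self,
      mul_one, mul_comm]
  refine ⟨fun D => edgeSign A C (base D) D * U (base D), ?_, fun B D hBD hne => ?_⟩ <;> beta_reduce
  · obtain ⟨g, hg⟩ := A.nonempty
    rw [hV A hg, hV C (hAC.le hg), edgeSign_of_not_le g hAC.lt.not_ge,
      edgeSign_of_mem_of_le hg le_rfl]
    exact fun h => absurd (mul_right_cancel h) (by decide)
  · obtain ⟨g, hg⟩ := B.nonempty
    rw [hV B hg, hV D (hBD.le hg), hP.edgeSign_eq_of_covBy hAC hBD hne hg]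

theorem isAcyclic_hasse : (SimpleGraph.hasse (EdgeClosure P)).IsAcyclic := by
  have isBridge {A C : EdgeClosure P} (hAC : A ⋖ C) :
      (SimpleGraph.hasse (EdgeClosure P)).IsBridge s(A, C) := by
    obtain ⟨V, hne, hV⟩ := hP.exists_sign_of_covBy hAC
    rw [SimpleGraph.isBridge_iff]
    have hVadj {B D} (h : ((SimpleGraph.hasse (EdgeClosure P)).deleteEdges {s(A, C)}).Adj B D) :
        V B = V D := by
      obtain ⟨hBD, hedge⟩ := SimpleGraph.deleteEdges_adj.1 h
      rw [Set.mem_singleton_iff, Sym2.eq_iff, not_or] at hedge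
      rcases hBD with hBD | hDB
      · exact hV B D hBD hedge.1
      · exact (hV D B hDB fun h => hedge.2 h.symm).symm
    have hVwalk {B D} (p : ((SimpleGraph.hasse (EdgeClosure P)).deleteEdges {s(A, C)}).Walk B D) :
        V B = V D := by
      induction p with
      | nil => rfl
      | cons h _ ih => exact (hVadj h).trans ih
    exact fun ⟨p⟩ => hne (hVwalk p)
  refine SimpleGraph.isAcyclic_iff_forall_adj_isBridge.2 fun A C hAC => ?_
  rcases hAC with hAC | hCA
  · exact isBridge hAC
  · exact Sym2.eq_swap (a := A) ▸ isBridge hCA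

theorem subset_image_mul_left (C : EdgeClosure P) {g : G} (hg : g ∈ C) :
    (C : Set G) ⊆ (g * ·) '' P :=
  fun h hh => ⟨g⁻¹ * h, hP.pAdj_of_mem C hg hh, mul_inv_cancel_left g h⟩

theorem finite_coe (hfin : P.Finite) (C : EdgeClosure P) : (C : Set G).Finite := by
  obtain ⟨g, hg⟩ := C.nonempty
  exact (hfin.image _).subset (hP.subset_image_mul_left C hg)

theorem reachable_hasse_of_le (hfin : P.Finite) {A C : EdgeClosure P} (hAC : A ≤ C) :
    (SimpleGraph.hasse (EdgeClosure P)).Reachable A C := by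
  have hIcc (A C : EdgeClosure P) : (Set.Icc A C).Finite :=
    ((hP.finite_coe hfin C).finite_subsets.preimage SetLike.coe_injective.injOn).subset
      fun B hB => hB.2
  let := LocallyFiniteOrder.ofFiniteIcc hIcc
  rw [SimpleGraph.reachable_iff_reflTransGen]
  exact Relation.ReflTransGen.mono (fun _ _ => Or.inl) _ _ (le_iff_reflTransGen_covBy.1 hAC)

theorem connected_hasse (hfin : P.Finite) :
    (SimpleGraph.hasse (EdgeClosure P)).Connected := by
  let loop (g : G) : EdgeClosure P := .mk (hP.pAdj_refl g)
  have reachable_of_mem (C : EdgeClosure P) {g : G} (hg : g ∈ C) :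
      (SimpleGraph.hasse (EdgeClosure P)).Reachable (loop g) C :=
    hP.reachable_hasse_of_le hfin (C.edgeClosure_subset hg hg)
  have reachable_loop (l : List G) (hl : ∀ x ∈ l, x ∈ P) (g : G) :
      (SimpleGraph.hasse (EdgeClosure P)).Reachable (loop g) (loop (g * l.prod)) := by
    induction l generalizing g with
    | nil => simp
    | cons u l ih =>
      rw [List.forall_mem_cons] at hl
      rw [List.prod_cons, ← mul_assoc]
      refine .trans ?_ (ih hl.2 (g * u))
      let C : EdgeClosure P := .mk (.mul_right hl.1 g)
      exact (reachable_of_mem C (left_mem_edgeClosure _ _)).trans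
        (reachable_of_mem C (right_mem_edgeClosure _ _)).symm
  refine @SimpleGraph.Connected.mk _ _ (fun A C => ?_) ⟨loop 1⟩
  obtain ⟨g, hg⟩ := A.nonempty
  obtain ⟨h, hh⟩ := C.nonempty
  obtain ⟨l, hl, hlgh⟩ := hP.exists_forall_mem_prod_eq (g⁻¹ * h)
  have := reachable_loop l hl g
  rw [hlgh, mul_inv_cancel_left] at this
  exact (reachable_of_mem A hg).symm.trans (this.trans (reachable_of_mem C hh))

theorem isTree_hasse (hfin : P.Finite) : (SimpleGraph.hasse (EdgeClosure P)).IsTree :=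
  ⟨hP.connected_hasse hfin, hP.isAcyclic_hasse⟩

theorem card_stabilizer_dvd (hfin : P.Finite) (C : EdgeClosure P) :
    Nat.card (MulAction.stabilizer G C) ∣ P.ncard.factorial := by
  obtain ⟨g, hg⟩ := C.nonempty
  let orbitMap (k : MulAction.stabilizer G C) : P := ⟨g⁻¹ * (k * g), hP.pAdj_of_mem C hg <| by
    have := Set.smul_mem_smul_set (a := (k : G)) hg
    rwa [← EdgeClosure.coe_smul, MulAction.mem_stabilizer_iff.1 k.2] at this⟩
  have hinj : Function.Injective orbitMap := fun k l hkl => by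
    simpa [orbitMap] using congrArg Subtype.val hkl
  have := hfin.to_subtype
  have := Finite.of_injective orbitMap hinj
  exact Nat.dvd_factorial Nat.card_pos
    ((Nat.card_le_card_of_injective orbitMap hinj).trans (Nat.card_coe_set_eq P).le)

theorem exists_finiteIndex_isFreeGroup (hfin : P.Finite) :
    ∃ H : Subgroup G, H.FiniteIndex ∧ IsFreeGroup H :=
  exists_finiteIndex_isFreeGroup_of_isTree_hasse (hP.isTree_hasse hfin)
    P.ncard.factorial_ne_zero (hP.card_stabilizer_dvd hfin)

end IsPregroupStructure

end Pregroups

section GeodesicSegments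

variable {X : Type*} [MetricSpace X] {s : Set X} {x y : X}

theorem IsGeodesicSegment.left_mem (hs : IsGeodesicSegment s x y) : x ∈ s := by
  obtain ⟨F, ⟨h0, -, -⟩, rfl⟩ := hs
  exact ⟨0, ⟨le_rfl, dist_nonneg⟩, h0⟩

theorem IsGeodesicSegment.symm (hs : IsGeodesicSegment s x y) : IsGeodesicSegment s y x := by
  obtain ⟨F, ⟨h0, h1, hdist⟩, rfl⟩ := hs
  rw [IsGeodesicSegment, dist_comm y x]
  have hmaps : ∀ t ∈ Icc 0 (dist x y), dist x y - t ∈ Icc 0 (dist x y) := fun t ht =>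
    ⟨sub_nonneg.2 ht.2, sub_le_self _ ht.1⟩
  refine ⟨fun t => F (dist x y - t), ⟨by simp [h1], by simp [dist_comm y x, h0], ?_⟩, ?_⟩
  · rw [dist_comm y x]
    intro a ha b hb
    rw [hdist _ (hmaps a ha) _ (hmaps b hb), sub_sub_sub_cancel_left, abs_sub_comm]
  · refine Subset.antisymm ?_ ?_
    · rintro _ ⟨t, ht, rfl⟩
      exact ⟨dist x y - t, hmaps t ht, by simp⟩
    · rintro _ ⟨t, ht, rfl⟩
      exact ⟨dist x y - t, hmaps t ht, rfl⟩

theorem IsGeodesicSegment.exists_dist_le_of_chain (hs : IsGeodesicSegment s x y) {c : ℕ → X}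
    {R D : ℝ} (hcs : ∀ j, ∃ p ∈ s, dist (c j) p ≤ R) (hstep : ∀ j, dist (c j) (c (j + 1)) ≤ D)
    (hx : dist (c 0) x ≤ R) {n : ℕ} (hy : dist (c n) y ≤ R) {p : X} (hp : p ∈ s) :
    ∃ j, dist p (c j) ≤ 3 * R + D := by
  obtain ⟨F, ⟨h0, h1, hdist⟩, rfl⟩ := hs
  obtain ⟨w, hw, rfl⟩ := hp
  have hdist' {a b : ℝ} (ha : a ∈ Icc 0 (dist x y)) (hb : b ∈ Icc 0 (dist x y)) (hab : a ≤ b) :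
      dist (F a) (F b) = b - a := by
    rw [hdist a ha b hb, abs_sub_comm, abs_of_nonneg (sub_nonneg.2 hab)]
  have hD : 0 ≤ D := dist_nonneg.trans (hstep 0)
  let Passed (j : ℕ) : Prop := ∃ b ∈ Icc 0 (dist x y), w ≤ b ∧ dist (c j) (F b) ≤ R
  have hbetween {a b : ℝ} {j : ℕ} (ha : a ∈ Icc 0 (dist x y)) (hb : b ∈ Icc 0 (dist x y))
      (haw : a ≤ w) (hwb : w ≤ b) (hja : dist (c j) (F a) ≤ R) (hjb : dist (c j) (F b) ≤ R + D) :
      dist (F w) (c j) ≤ 3 * R + D := by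
    have hab := dist_triangle_left (F a) (F b) (c j)
    have hwc := dist_triangle_left (c j) (F w) (F a)
    rw [hdist' ha hb (haw.trans hwb)] at hab
    rw [hdist' ha hw haw, dist_comm _ (c j), dist_comm (c j) (F w)] at hwc
    linarith
  have hzero : (0 : ℝ) ∈ Icc 0 (dist x y) := ⟨le_rfl, dist_nonneg⟩
  by_cases hPassed : Passed 0
  · obtain ⟨b, hb, hwb, hcb⟩ := hPassed
    exact ⟨0, hbetween hzero hb hw.1 hwb (h0.symm ▸ hx) (by linarith)⟩
  · obtain ⟨j, hj, b, hb, hwb, hcb⟩ := Nat.exists_not_and_succ_of_not_zero_of_exists hPassed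
      ⟨n, dist x y, ⟨dist_nonneg, le_rfl⟩, hw.2, h1.symm ▸ hy⟩
    obtain ⟨_, ⟨a, ha, rfl⟩, hca⟩ := hcs j
    have haw : a ≤ w := le_of_not_ge fun hwa => hj ⟨a, ha, hwa, hca⟩
    exact ⟨j, hbetween ha hb haw hwb hca
      (by linarith [dist_triangle (c j) (c (j + 1)) (F b), hstep j])⟩

end GeodesicSegments

section CayleyGraphs

variable {G X : Type*} [MetricSpace X] {f : G → X}

/-- A step between two group elements at distance at most `2` whose endpoint lies within `1/2` of
the set `A`: paths in `A` are recorded in `G` by chains of such steps. -/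
def CoarseStep (f : G → X) (A : Set X) (g h : G) : Prop :=
  dist (f g) (f h) ≤ 2 ∧ ∃ p ∈ A, dist p (f h) ≤ 1 / 2

theorem CoarseStep.of_dist_le {A : Set X} {p q : X} (hq : q ∈ A) (hpq : dist p q ≤ 1) {g h : G}
    (hpg : dist p (f g) ≤ 1 / 2) (hqh : dist q (f h) ≤ 1 / 2) : CoarseStep f A g h := by
  refine ⟨?_, q, hq, hqh⟩
  have := dist_triangle4 (f g) p q (f h)
  rw [dist_comm (f g) p] at this
  linarith

variable [Group G] {P S : Set G}

theorem prefix_or_exists_eq_append_of_prefix_append {α : Type*} {l m a : List α}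
    (ha : a <+: l ++ m) : a <+: l ∨ ∃ b, a = l ++ b ∧ b <+: m := by
  obtain ⟨t, ht⟩ := ha
  rcases List.append_eq_append_iff.1 ht with ⟨b, rfl, -⟩ | ⟨b, rfl, rfl⟩
  · exact .inl (List.prefix_append a b)
  · exact .inr ⟨b, rfl, List.prefix_append b t⟩

theorem exists_length_eq_wordLength (hS : Subgroup.closure S = ⊤) (g : G) :
    ∃ l : List G, l.length = wordLength S g ∧ (∀ x ∈ l, x ∈ S ∨ x⁻¹ ∈ S) ∧ l.prod = g := by
  refine Nat.sInf_mem (s := {n | ∃ l : List G, l.length = n ∧ _ ∧ l.prod = g}) ?_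
  have hg : g ∈ Subgroup.closure S := hS ▸ Subgroup.mem_top g
  rw [← Subgroup.mem_toSubmonoid, Subgroup.closure_toSubmonoid] at hg
  obtain ⟨l, hl, hlg⟩ := Submonoid.exists_list_of_mem_closure hg
  exact ⟨l.length, l, rfl, hl, hlg⟩

namespace IsCayleyGraph

theorem dist_mul_left (hf : IsCayleyGraph S f) (k g h : G) :
    dist (f (k * g)) (f (k * h)) = dist (f g) (f h) := by
  rw [hf.dist_eq, hf.dist_eq, mul_inv_rev, mul_assoc, inv_mul_cancel_left]

theorem dist_mul_right (hf : IsCayleyGraph S f) (g h : G) :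
    dist (f g) (f (g * h)) = dist (f 1) (f h) := by
  simpa using hf.dist_mul_left g 1 h

theorem finite_setOf_dist_le (hf : IsCayleyGraph S f) (hS : S.Finite) (n : ℕ) :
    {g : G | dist (f 1) (f g) ≤ n}.Finite := by
  let A : Set G := S ∪ S⁻¹
  have : Finite A := hS.union hS.inv
  refine ((List.finite_length_le A n).image fun l => (l.map Subtype.val).prod).subset ?_
  intro g (hg : dist (f 1) (f g) ≤ n)
  rw [hf.dist_eq, inv_one, one_mul, Nat.cast_le] at hg
  obtain ⟨l, hlen, hl, hlg⟩ := exists_length_eq_wordLength hf.generates g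
  lift l to List A using hl
  exact ⟨l, by simpa [← hlen] using hg, hlg⟩

end IsCayleyGraph

namespace IsPregroupStructure

theorem exists_isReducedProd_forall_prefix_prod_eq (hP : IsPregroupStructure P) {l : List G}
    (hl : ∀ x ∈ l, x ∈ P) : ∃ v, IsReducedProd P v ∧ v.prod = l.prod ∧
      ∀ a, a <+: v → ∃ c, c <+: l ∧ c.prod = a.prod := by
  refine contraction_induction (motive := fun l => ∃ v, IsReducedProd P v ∧ v.prod = l.prod ∧
    ∀ a, a <+: v → ∃ c, c <+: l ∧ c.prod = a.prod)
    ?_ (fun l hl => ⟨l, hl, rfl, fun a ha => ⟨a, ha, rfl⟩⟩) ?_ l hl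
  · refine ⟨[1], hP.isReducedProd_one, by simp, fun a ha => ⟨[], List.prefix_rfl, ?_⟩⟩
    rcases List.prefix_cons_iff.1 ha with rfl | ⟨t, rfl, ht⟩ <;> simp_all
  · rintro l₁ x y l₂ - - ⟨v, hv, hvl, hpre⟩
    refine ⟨v, hv, by simp [hvl, mul_assoc], fun a ha => ?_⟩
    obtain ⟨c, hc, hca⟩ := hpre a ha
    rcases prefix_or_exists_eq_append_of_prefix_append hc with hc | ⟨e, rfl, he⟩
    · exact ⟨c, hc.trans (List.prefix_append _ _), hca⟩
    rcases List.prefix_cons_iff.1 he with rfl | ⟨e, rfl, hel₂⟩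
    · exact ⟨l₁, List.prefix_append _ _, by simpa using hca⟩
    · exact ⟨l₁ ++ x :: y :: e, (List.prefix_append_right_inj l₁).2 (by simpa using hel₂),
        by simpa [mul_assoc] using hca⟩

theorem prod_take_inv_mul_prod_take_mem (hP : IsPregroupStructure P) {u v : List G}
    (hu : IsReducedProd P u) (hv : IsReducedProd P v) (huv : u.prod = v.prod) (j : ℕ) :
    (u.take j).prod⁻¹ * (v.take j).prod ∈ P := by
  obtain ⟨hlen, a, ha0, -, haP, hav⟩ := hP.uniq u v hu hv huv
  rcases lt_or_ge j u.length with hj | hj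
  swap
  · rw [List.take_of_length_le hj, List.take_of_length_le (hlen ▸ hj), huv, inv_mul_cancel]
    exact hP.one_mem
  have hprod : ∀ i ≤ j, (v.take i).prod = (u.take i).prod * a i := by
    intro i hi
    induction i with
    | zero => simp [ha0]
    | succ i ih =>
      rw [List.prod_take_succ _ _ (by omega), List.prod_take_succ _ _ (by omega), ih (by omega),
        (hav i (by omega) (by omega)).2]
      group
  rw [hprod j le_rfl, inv_mul_cancel_left]
  rcases j.eq_zero_or_pos with rfl | hj0
  · exact ha0.symm ▸ hP.one_mem
  · exact haP j hj0 hj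

end IsPregroupStructure

/-- The real number `D` bounds the lengths of the elements of `P`, and every element of length at
most `2` is spelled by a word in `P` whose prefixes all have length at most `D`. -/
structure IsWordBound (P : Set G) (f : G → X) (D : ℝ) : Prop where
  dist_le : ∀ p ∈ P, dist (f 1) (f p) ≤ D
  exists_word : ∀ w : G, dist (f 1) (f w) ≤ 2 →
    ∃ l : List G, (∀ x ∈ l, x ∈ P) ∧ l.prod = w ∧ ∀ a, a <+: l → dist (f 1) (f a.prod) ≤ D

theorem IsPregroupStructure.exists_isWordBound (hP : IsPregroupStructure P) (hPfin : P.Finite)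
    (hf : IsCayleyGraph S f) (hS : S.Finite) : ∃ D : ℝ, IsWordBound P f D := by
  choose L hL hLprod using hP.exists_forall_mem_prod_eq
  let E : Set G := P ∪ ⋃ w ∈ {w : G | dist (f 1) (f w) ≤ 2}, {g | g ∈ (L w).inits.map List.prod}
  have hE : E.Finite := hPfin.union
    ((mod_cast hf.finite_setOf_dist_le hS 2 : {w : G | dist (f 1) (f w) ≤ 2}.Finite).biUnion
      fun w _ => List.finite_toSet _)
  obtain ⟨D, hD⟩ := (hE.image fun g => dist (f 1) (f g)).bddAbove
  refine ⟨D, fun p hp => hD ⟨p, .inl hp, rfl⟩, fun w hw => ⟨L w, hL w, hLprod w, fun a ha => ?_⟩⟩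
  refine hD ⟨a.prod, .inr (mem_biUnion hw ?_), rfl⟩
  exact List.mem_map.2 ⟨a, (List.mem_inits _ _).2 ha, rfl⟩

theorem IsCayleyGraph.reflTransGen_coarseStep (hf : IsCayleyGraph S f) {s A : Set X} {x y : X}
    (hs : IsGeodesicSegment s x y) (hsA : s ⊆ A) {g h : G} (hg : dist x (f g) ≤ 1 / 2)
    (hh : dist y (f h) ≤ 1 / 2) : Relation.ReflTransGen (CoarseStep f A) g h := by
  obtain ⟨F, ⟨h0, h1, hdist⟩, rfl⟩ := hs
  have hmem (i : ℕ) : min (i : ℝ) (dist x y) ∈ Icc 0 (dist x y) :=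
    ⟨le_min i.cast_nonneg dist_nonneg, min_le_right _ _⟩
  let q (i : ℕ) : X := F (min i (dist x y))
  have hqA (i : ℕ) : q i ∈ A := hsA ⟨_, hmem i, rfl⟩
  have hq (i : ℕ) : dist (q i) (q (i + 1)) ≤ 1 := by
    rw [hdist _ (hmem i) _ (hmem (i + 1))]
    exact (abs_min_sub_min_le_max _ _ _ _).trans (by simp)
  choose c hc using fun i => hf.dense (q i)
  obtain ⟨m, hm⟩ := exists_nat_ge (dist x y)
  have hq0 : q 0 = x := by simp [q, h0]
  have hqm : q m = y := by simp [q, min_eq_right hm, h1]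
  have hchain : Relation.ReflTransGen (CoarseStep f A) (c 0) (c m) :=
    (reflTransGen_of_succ_of_le (fun i j => CoarseStep f A (c i) (c j)) (fun i _ =>
      .of_dist_le (hqA _) (hq i) (hc i) (hc _)) m.zero_le).lift c fun _ _ => id
  refine .head (.of_dist_le (hqA 0) (by simp [hq0]) hg (hc 0)) (hchain.tail ?_)
  exact .of_dist_le (hqA m) (by simp [hqm]) (hc m) (hqm ▸ hh)

namespace IsWordBound

variable {D : ℝ} (hD : IsWordBound P f D) (hP : IsPregroupStructure P) (hf : IsCayleyGraph S f)
include hD hP hf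

theorem exists_word_near_of_coarseStep {A : Set X} {g h : G} (hg : ∃ p ∈ A, dist p (f g) ≤ 1 / 2)
    (hgh : Relation.ReflTransGen (CoarseStep f A) g h) :
    ∃ l : List G, (∀ x ∈ l, x ∈ P) ∧ l.prod = g⁻¹ * h ∧
      ∀ a, a <+: l → ∃ p ∈ A, dist p (f (g * a.prod)) ≤ D + 1 / 2 := by
  have hD0 : 0 ≤ D := dist_nonneg.trans (hD.dist_le 1 hP.one_mem)
  induction hgh with
  | refl =>
    obtain ⟨p, hp, hpg⟩ := hg
    refine ⟨[], by simp, by simp, fun a ha => ⟨p, hp, ?_⟩⟩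
    rw [List.prefix_nil.1 ha, List.prod_nil, mul_one]
    linarith
  | @tail h k hgh hhk ih =>
    obtain ⟨l, hl, hlprod, hpre⟩ := ih
    obtain ⟨p, hp, hph⟩ : ∃ p ∈ A, dist p (f h) ≤ 1 / 2 := by
      rcases hgh.cases_tail with rfl | ⟨_, _, hstep⟩
      exacts [hg, hstep.2]
    obtain ⟨m, hm, hmprod, hmpre⟩ := hD.exists_word (h⁻¹ * k) (by
      simpa [← hf.dist_mul_right h] using hhk.1)
    refine ⟨l ++ m, List.forall_mem_append.2 ⟨hl, hm⟩, by simp [hlprod, hmprod], fun a ha => ?_⟩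
    rcases prefix_or_exists_eq_append_of_prefix_append ha with ha | ⟨b, rfl, hb⟩
    · exact hpre a ha
    · refine ⟨p, hp, ?_⟩
      have := hmpre b hb
      rw [← hf.dist_mul_right h] at this
      rw [List.prod_append, hlprod, mul_assoc, mul_inv_cancel_left]
      linarith [dist_triangle p (f h) (f (h * b.prod))]

theorem exists_dist_prod_take_le {A : Set X} {g h : G} (hg : ∃ p ∈ A, dist p (f g) ≤ 1 / 2)
    (hgh : Relation.ReflTransGen (CoarseStep f A) g h) {u : List G} (hu : IsReducedProd P u)
    (huprod : u.prod = g⁻¹ * h) (j : ℕ) :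
    ∃ p ∈ A, dist (f (g * (u.take j).prod)) p ≤ 2 * D + 1 / 2 := by
  obtain ⟨l, hl, hlprod, hpre⟩ := hD.exists_word_near_of_coarseStep hP hf hg hgh
  obtain ⟨v, hv, hvprod, hvpre⟩ := hP.exists_isReducedProd_forall_prefix_prod_eq hl
  obtain ⟨c, hc, hcprod⟩ := hvpre (v.take j) ⟨v.drop j, List.take_append_drop j v⟩
  obtain ⟨p, hp, hpc⟩ := hpre c hc
  have hcomp := hD.dist_le _ (hP.prod_take_inv_mul_prod_take_mem hu hv
    (huprod.trans (hvprod.trans hlprod).symm) j)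
  rw [← hf.dist_mul_right (g * (u.take j).prod), mul_assoc, mul_inv_cancel_left, ← hcprod] at hcomp
  refine ⟨p, hp, ?_⟩
  linarith [dist_triangle_right (f (g * (u.take j).prod)) p (f (g * c.prod))]

theorem subset_cthickening_of_coarseStep {s A : Set X} {x y : X} (hs : IsGeodesicSegment s x y)
    (hx : x ∈ A) {g h : G} (hg : dist x (f g) ≤ 1 / 2) (hh : dist y (f h) ≤ 1 / 2)
    (hgh : Relation.ReflTransGen (CoarseStep f A) g h) : s ⊆ cthickening (9 * D + 2) A := by
  obtain ⟨u, hu, huprod⟩ := hP.exists_rep (g⁻¹ * h)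
  let c (j : ℕ) : X := f (g * (u.take j).prod)
  have hD0 : 0 ≤ D := dist_nonneg.trans (hD.dist_le 1 hP.one_mem)
  have hstep (j : ℕ) : dist (c j) (c (j + 1)) ≤ D := by
    rcases lt_or_ge j u.length with hj | hj
    · simp only [c]
      rw [List.prod_take_succ _ _ hj, ← mul_assoc, hf.dist_mul_right]
      exact hD.dist_le _ (hu.2.1 _ (List.getElem_mem hj))
    · simpa [c, List.take_of_length_le, hj, Nat.le_succ_of_le hj] using hD0
  have hcs : ∀ j, ∃ p ∈ s, dist (c j) p ≤ 2 * D + 1 / 2 :=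
    hD.exists_dist_prod_take_le hP hf ⟨x, hs.left_mem, hg⟩
      (hf.reflTransGen_coarseStep hs Subset.rfl hg hh) hu huprod
  have hc0 : dist (c 0) x ≤ 2 * D + 1 / 2 := by
    simp only [c, List.take_zero, List.prod_nil, mul_one]
    linarith [dist_comm x (f g)]
  have hcn : dist (c u.length) y ≤ 2 * D + 1 / 2 := by
    simp only [c, List.take_length, huprod, mul_inv_cancel_left]
    linarith [dist_comm y (f h)]
  intro p hp
  obtain ⟨j, hj⟩ := hs.exists_dist_le_of_chain hcs hstep hc0 hcn hp
  obtain ⟨q, hq, hcq⟩ := hD.exists_dist_prod_take_le hP hf ⟨x, hx, hg⟩ hgh hu huprod j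
  refine mem_cthickening_of_dist_le p q _ _ hq ?_
  linarith [dist_triangle p (c j) q]

theorem subset_cthickening_union {s t r : Set X} {x y z : X} (hs : IsGeodesicSegment s x y)
    (ht : IsGeodesicSegment t x z) (hr : IsGeodesicSegment r z y) :
    s ⊆ cthickening (9 * D + 2) (t ∪ r) := by
  obtain ⟨g, hg⟩ := hf.dense x
  obtain ⟨h, hh⟩ := hf.dense y
  obtain ⟨k, hk⟩ := hf.dense z
  exact hD.subset_cthickening_of_coarseStep hP hf hs (.inl ht.left_mem) hg hh
    ((hf.reflTransGen_coarseStep ht subset_union_left hg hk).trans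
      (hf.reflTransGen_coarseStep hr subset_union_right hk hh))

theorem thinTriangle {s t r : Set X} {x y z : X} (hs : IsGeodesicSegment s x y)
    (ht : IsGeodesicSegment t y z) (hr : IsGeodesicSegment r x z) :
    ThinTriangle (9 * D + 2) s t r :=
  ⟨union_comm r t ▸ hD.subset_cthickening_union hP hf hs hr ht.symm,
    hD.subset_cthickening_union hP hf ht hs.symm hr, hD.subset_cthickening_union hP hf hr hs ht⟩

end IsWordBound

end CayleyGraphs

/-- a group with a pregroup structure over a finite subset is
virtually free; in particular it is word-hyperbolic. -/
theorem finite_pregroup_virtually_free {G : Type u} [Group G]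
    (P : Set G) (hP : IsPregroupStructure P) (hPfin : P.Finite) :
    (∃ H : Subgroup G, H.FiniteIndex ∧ ∃ ι : Type u, Nonempty (H ≃* FreeGroup ι)) ∧
      ∀ S : Set G, S.Finite → Subgroup.closure S = ⊤ →
        ∀ (X : Type u) [MetricSpace X], ∀ f : G → X, IsCayleyGraph S f →
          ∃ δ > (0 : ℝ), ∀ x y z : X, ∀ s t r : Set X,
            IsGeodesicSegment s x y → IsGeodesicSegment t y z →
            IsGeodesicSegment r x z → ThinTriangle δ s t r := by
  constructor
  · obtain ⟨H, hH, hfree⟩ := hP.exists_finiteIndex_isFreeGroup hPfin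
    exact ⟨H, hH, IsFreeGroup.Generators H, ⟨IsFreeGroup.toFreeGroup H⟩⟩
  · intro S hS _ X _ f hf
    obtain ⟨D, hD⟩ := hP.exists_isWordBound hPfin hf hS
    have hD0 : 0 ≤ D := dist_nonneg.trans (hD.dist_le 1 hP.one_mem)
    exact ⟨9 * D + 2, by positivity, fun _ _ _ _ _ _ => hD.thinTriangle hP hf⟩
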